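/- (Theorem 2.3: no spurious local minima; global optimality is detected by local optimality of the collapsed point.) Let p be a real polynomial in D variables of total degree at most d, let L = 2, and consider the objective f(μ) = Σ_{|n|≤d} p_n Σ_{l=1}^2 ∏_{i=1}^D μ_{i,n_i}^{(l)} on the feasible set F_2 ⊆ ℝ^{(2d+1)×D×2}. Let μ = ((μ_1^{(1)}, …, μ_D^{(1)}), (μ_1^{(2)}, …, μ_D^{(2)})) ∈ F_2 and set α^{(l)} = ∏_{i=1}^D μ_{i,0}^{(l)}. Then f(μ) ≤ f(ν) for all ν ∈ F_2 (i.e., μ is a global minimum of f on F_2) if and only if for every l ∈ {1,2} with α^{(l)} ≠ 0, the point ν^{(l)} := ((μ_1^{(l)}/α^{(l)}, μ_2^{(l)}, …, μ_D^{(l)}), (0, …, 0)) is a local minimum of f on F_2, i.e., there is a neighborhood U of ν^{(l)} in ℝ^{(2d+1)×D×2} such that f(ν^{(l)}) ≤ f(ρ) for all ρ ∈ U ∩ F_2. -/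

import Mathlib

open MeasureTheory

/-- The degree-`d` moment matrix `𝓜_d(μ)` of a vector `μ ∈ ℝ^{2d+1}`,
with entries `μ (m+n)`. -/
noncomputable def momentMatrix (d : ℕ) (μ : Fin (2*d+1) → ℝ) :
    Matrix (Fin (d+1)) (Fin (d+1)) ℝ :=
  fun m n => μ ⟨m.1 + n.1, by have hm := m.isLt; have hn := n.isLt; omega⟩

/-- The localized moment matrix `𝓜_{d-1}(μ; 1 - x²)` of a vector `μ ∈ ℝ^{2d+1}`,
with entries `μ (m+n) - μ (m+n+2)`. -/
noncomputable def locMomentMatrix (d : ℕ) (μ : Fin (2*d+1) → ℝ) :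
    Matrix (Fin d) (Fin d) ℝ :=
  fun m n =>
    μ ⟨m.1 + n.1, by have hm := m.isLt; have hn := n.isLt; omega⟩ -
      μ ⟨m.1 + n.1 + 2, by have hm := m.isLt; have hn := n.isLt; omega⟩

/-- Entry `k` of a vector `μ ∈ ℝ^{2d+1}`, indexed by a natural number (`0` out of
range). -/
noncomputable def entry (d : ℕ) (μ : Fin (2*d+1) → ℝ) (k : ℕ) : ℝ :=
  if h : k < 2*d+1 then μ ⟨k, h⟩ else 0

/-- The feasible set `F₂ ⊆ ℝ^{(2d+1) × D × 2}`: all moment matrices are PSD and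
`Σ_l ∏_i μ_{i,0}^{(l)} = 1`. -/
def Feasible (D d : ℕ) (μ : Fin 2 → Fin D → Fin (2*d+1) → ℝ) : Prop :=
  (∀ l i, (momentMatrix d (μ l i)).PosSemidef) ∧
  (∀ l i, (locMomentMatrix d (μ l i)).PosSemidef) ∧
  (∑ l, ∏ i, entry d (μ l i) 0) = 1

/-- The reformulated objective `f(μ) = Σ_n p_n Σ_l ∏_i μ_{i,n_i}^{(l)}`. -/
noncomputable def objective (D d : ℕ) (p : MvPolynomial (Fin D) ℝ)
    (μ : Fin 2 → Fin D → Fin (2*d+1) → ℝ) : ℝ :=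
  ∑ n ∈ p.support, p.coeff n * ∑ l, ∏ i, entry d (μ l i) (n i)

/-- The collapsed point `((μ₁^{(l)}/α, μ₂^{(l)}, …, μ_D^{(l)}), (0, …, 0))`. -/
noncomputable def collapse (D d : ℕ) (μ : Fin 2 → Fin D → Fin (2*d+1) → ℝ)
    (l : Fin 2) (α : ℝ) : Fin 2 → Fin D → Fin (2*d+1) → ℝ :=
  fun l' i k => if l'.1 = 0 then (if i.1 = 0 then μ l i k / α else μ l i k) else 0

/-- The contribution `Σ_n p_n ∏_i x_{i,n_i}` of a single product term to the objective. -/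
noncomputable def termValue (D d : ℕ) (p : MvPolynomial (Fin D) ℝ)
    (x : Fin D → Fin (2*d+1) → ℝ) : ℝ :=
  ∑ n ∈ p.support, p.coeff n * ∏ i, entry d (x i) (n i)

/-- All moment matrices and localized moment matrices of a single product term are PSD. -/
def TermPSD (D d : ℕ) (x : Fin D → Fin (2*d+1) → ℝ) : Prop :=
  ∀ i, (momentMatrix d (x i)).PosSemidef ∧ (locMomentMatrix d (x i)).PosSemidef

/-- The weights scaling the first factor by `t` and leaving the others unchanged. -/
def firstWeight (D : ℕ) (t : ℝ) (i : Fin D) : ℝ := if i.1 = 0 then t else 1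

lemma prod_firstWeight {D : ℕ} (hD : 1 ≤ D) (t : ℝ) : ∏ i, firstWeight D t i = t := by
  obtain ⟨D, rfl⟩ := Nat.exists_eq_add_of_le' hD
  simp [firstWeight]

lemma firstWeight_nonneg {D : ℕ} {t : ℝ} (ht : 0 ≤ t) (i : Fin D) : 0 ≤ firstWeight D t i := by
  unfold firstWeight
  split_ifs <;> linarith

lemma entry_smul (d : ℕ) (c : ℝ) (x : Fin (2*d+1) → ℝ) (k : ℕ) :
    entry d (c • x) k = c * entry d x k := by
  unfold entry
  split_ifs <;> simp

lemma prod_entry_smul {D d : ℕ} (c : Fin D → ℝ) (x : Fin D → Fin (2*d+1) → ℝ) (n : Fin D → ℕ) :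
    ∏ i, entry d (c i • x i) (n i) = (∏ i, c i) * ∏ i, entry d (x i) (n i) := by
  simp only [entry_smul, Finset.prod_mul_distrib]

lemma termValue_smul {D d : ℕ} (p : MvPolynomial (Fin D) ℝ) (c : Fin D → ℝ)
    (x : Fin D → Fin (2*d+1) → ℝ) :
    termValue D d p (fun i => c i • x i) = (∏ i, c i) * termValue D d p x := by
  simp only [termValue, prod_entry_smul, Finset.mul_sum]
  exact Finset.sum_congr rfl fun n _ => by ring

lemma TermPSD.smul {D d : ℕ} {x : Fin D → Fin (2*d+1) → ℝ} (hx : TermPSD D d x)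
    {c : Fin D → ℝ} (hc : ∀ i, 0 ≤ c i) : TermPSD D d (fun i => c i • x i) := by
  intro i
  have hM : momentMatrix d (c i • x i) = c i • momentMatrix d (x i) := rfl
  have hL : locMomentMatrix d (c i • x i) = c i • locMomentMatrix d (x i) := by
    ext m n
    simp [locMomentMatrix, mul_sub]
  rw [hM, hL]
  exact ⟨(hx i).1.smul (hc i), (hx i).2.smul (hc i)⟩

lemma objective_eq_add {D d : ℕ} (p : MvPolynomial (Fin D) ℝ)
    (μ : Fin 2 → Fin D → Fin (2*d+1) → ℝ) :
    objective D d p μ = termValue D d p (μ 0) + termValue D d p (μ 1) := by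
  simp only [objective, termValue, Fin.sum_univ_two, mul_add, Finset.sum_add_distrib]

lemma feasible_iff {D d : ℕ} (μ : Fin 2 → Fin D → Fin (2*d+1) → ℝ) :
    Feasible D d μ ↔ TermPSD D d (μ 0) ∧ TermPSD D d (μ 1) ∧
      (∏ i, entry d (μ 0 i) 0) + ∏ i, entry d (μ 1 i) 0 = 1 := by
  simp only [Feasible, TermPSD, Fin.forall_fin_two, Fin.sum_univ_two, forall_and]
  tauto

lemma Feasible.termPSD {D d : ℕ} {μ : Fin 2 → Fin D → Fin (2*d+1) → ℝ}
    (hμ : Feasible D d μ) (l : Fin 2) : TermPSD D d (μ l) :=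
  fun i => ⟨hμ.1 l i, hμ.2.1 l i⟩

lemma TermPSD.entry_zero_nonneg {D d : ℕ} {x : Fin D → Fin (2*d+1) → ℝ}
    (hx : TermPSD D d x) (i : Fin D) : 0 ≤ entry d (x i) 0 := by
  have h := (hx i).1.diag_nonneg (i := 0)
  simpa [entry, momentMatrix] using h

lemma TermPSD.prod_nonneg {D d : ℕ} {x : Fin D → Fin (2*d+1) → ℝ}
    (hx : TermPSD D d x) : 0 ≤ ∏ i, entry d (x i) 0 :=
  Finset.prod_nonneg fun i _ => hx.entry_zero_nonneg i

/-- A real quadratic `a t² + 2 b t` that is nonnegative everywhere has `b = 0`. -/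
lemma eq_zero_of_forall_quadratic_nonneg {a b : ℝ}
    (h : ∀ t : ℝ, 0 ≤ a * t ^ 2 + 2 * b * t) : b = 0 := by
  have h2 : discrim a (2 * b) 0 ≤ 0 := discrim_le_zero fun t => by nlinarith [h t]
  unfold discrim at h2
  nlinarith [sq_nonneg b]

/-- If the zeroth moment vanishes, so do all moments up to degree `d`. -/
lemma entry_eq_zero_of_entry_zero {d : ℕ} {x : Fin (2*d+1) → ℝ}
    (hx : (momentMatrix d x).PosSemidef) (h0 : entry d x 0 = 0) {k : ℕ} (hk : k ≤ d) :
    entry d x k = 0 := by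
  rcases Nat.eq_zero_or_pos k with rfl | hpos
  · exact h0
  let j : Fin (d+1) := ⟨k, by omega⟩
  have h00 : momentMatrix d x 0 0 = 0 := by simpa [entry, momentMatrix] using h0
  have h0j : momentMatrix d x 0 j = entry d x k := by
    simp [entry, momentMatrix, j, show k < 2 * d + 1 by omega]
  have hj0 : momentMatrix d x j 0 = entry d x k := by
    simp [entry, momentMatrix, j, show k < 2 * d + 1 by omega]
  refine eq_zero_of_forall_quadratic_nonneg (a := momentMatrix d x j j) fun t => ?_
  have h := hx.dotProduct_mulVec_nonneg (Pi.single 0 1 + t • Pi.single j 1)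
  simp [Matrix.mulVec_add, Matrix.mulVec_smul, dotProduct_add, add_dotProduct, h00, h0j, hj0] at h
  nlinarith [h]

/-- A product term of total mass zero does not contribute to the objective. -/
lemma TermPSD.termValue_eq_zero {D d : ℕ} {p : MvPolynomial (Fin D) ℝ}
    (hdeg : p.totalDegree ≤ d) {x : Fin D → Fin (2*d+1) → ℝ} (hx : TermPSD D d x)
    (h : ∏ i, entry d (x i) 0 = 0) : termValue D d p x = 0 := by
  obtain ⟨i, -, hi⟩ := Finset.prod_eq_zero_iff.1 h
  refine Finset.sum_eq_zero fun n hn => ?_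
  have hni : n i ≤ d := by
    have h1 : (n.sum fun _ e => e) ≤ p.totalDegree := MvPolynomial.le_totalDegree hn
    have h2 : n i ≤ n.sum fun _ e => e := n.le_degree i
    omega
  rw [Finset.prod_eq_zero (Finset.mem_univ i) (entry_eq_zero_of_entry_zero (hx i).1 hi hni),
    mul_zero]

lemma collapse_zero {D d : ℕ} (μ : Fin 2 → Fin D → Fin (2*d+1) → ℝ) (l : Fin 2) (α : ℝ) :
    collapse D d μ l α 0 = fun i => firstWeight D α⁻¹ i • μ l i := by
  ext i k
  simp only [collapse, firstWeight, Pi.smul_apply, smul_eq_mul]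
  split_ifs <;> simp_all [div_eq_inv_mul]

lemma collapse_one {D d : ℕ} (μ : Fin 2 → Fin D → Fin (2*d+1) → ℝ) (l : Fin 2) (α : ℝ) :
    collapse D d μ l α 1 = fun i => (0 : ℝ) • μ l i := by
  ext i k
  simp [collapse]

lemma objective_collapse {D d : ℕ} (hD : 1 ≤ D) (p : MvPolynomial (Fin D) ℝ)
    (μ : Fin 2 → Fin D → Fin (2*d+1) → ℝ) (l : Fin 2) (α : ℝ) :
    objective D d p (collapse D d μ l α) = α⁻¹ * termValue D d p (μ l) := by
  rw [objective_eq_add, collapse_zero, collapse_one, termValue_smul,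
    termValue_smul p (fun _ => (0 : ℝ)), prod_firstWeight hD]
  simp [Nat.pos_iff_ne_zero.1 hD]

lemma feasible_collapse {D d : ℕ} (hD : 1 ≤ D) {μ : Fin 2 → Fin D → Fin (2*d+1) → ℝ}
    {l : Fin 2} (hx : TermPSD D d (μ l)) (h : ∏ i, entry d (μ l i) 0 ≠ 0) :
    Feasible D d (collapse D d μ l (∏ i, entry d (μ l i) 0)) := by
  rw [feasible_iff, collapse_zero, collapse_one]
  refine ⟨hx.smul (firstWeight_nonneg (inv_nonneg.2 hx.prod_nonneg)),
    hx.smul (c := fun _ => 0) fun _ => le_rfl, ?_⟩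
  rw [prod_entry_smul _ _ (fun _ => 0), prod_entry_smul (fun _ => (0 : ℝ)) _ (fun _ => 0),
    prod_firstWeight hD, inv_mul_cancel₀ h]
  simp [Nat.pos_iff_ne_zero.1 hD]

/-- If a feasible point with vanishing second term is a local minimum, then moving mass from its
first term to a new term `x` cannot decrease the objective. -/
lemma mass_mul_objective_le_termValue {D d : ℕ} (hD : 1 ≤ D) (p : MvPolynomial (Fin D) ℝ)
    {ν : Fin 2 → Fin D → Fin (2*d+1) → ℝ} (hν : Feasible D d ν) (hν1 : ν 1 = 0)
    {U : Set (Fin 2 → Fin D → Fin (2*d+1) → ℝ)} (hU : U ∈ nhds ν)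
    (hmin : ∀ ρ ∈ U, Feasible D d ρ → objective D d p ν ≤ objective D d p ρ)
    {x : Fin D → Fin (2*d+1) → ℝ} (hx : TermPSD D d x) :
    (∏ i, entry d (x i) 0) * objective D d p ν ≤ termValue D d p x := by
  have hD0 : D ≠ 0 := Nat.pos_iff_ne_zero.1 hD
  set m := ∏ i, entry d (x i) 0 with hm
  have hzero : (fun i => (0 : ℝ) • x i) = ν 1 := by
    rw [hν1]
    ext
    simp
  have hmass : ∏ i, entry d (ν 1 i) 0 = 0 := by
    rw [← hzero, prod_entry_smul (fun _ => (0 : ℝ)) x (fun _ => 0)]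
    simp [hD0]
  have hvalue : termValue D d p (ν 1) = 0 := by
    rw [← hzero, termValue_smul p (fun _ => (0 : ℝ))]
    simp [hD0]
  have hsum := ((feasible_iff ν).1 hν).2.2
  rw [hmass, add_zero] at hsum
  have hobj : objective D d p ν = termValue D d p (ν 0) := by
    rw [objective_eq_add, hvalue, add_zero]
  let γ : ℝ → Fin 2 → Fin D → Fin (2*d+1) → ℝ := fun s =>
    ![fun i => firstWeight D (1 - s ^ D * m) i • ν 0 i, fun i => s • x i]
  have hγ : Continuous γ := by
    refine continuous_pi fun l => ?_
    fin_cases l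
    · refine continuous_pi fun i => ?_
      by_cases hi : i.1 = 0
      · simp only [γ, firstWeight, hi, if_true, Fin.zero_eta, Matrix.cons_val_zero]
        fun_prop
      · simp only [γ, firstWeight, hi, if_false, Fin.zero_eta, Matrix.cons_val_zero]
        fun_prop
    · simp only [γ, Fin.mk_one, Matrix.cons_val_one]
      fun_prop
  have hγ0 : γ 0 = ν := by
    funext l
    fin_cases l
    · ext i k
      simp [γ, firstWeight, hD0]
    · exact hzero
  have hnear : ∀ᶠ s in nhds (0 : ℝ), γ s ∈ U :=
    hγ.continuousAt.eventually_mem (by rwa [hγ0])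
  have hweight : ∀ᶠ s in nhds (0 : ℝ), 0 < 1 - s ^ D * m := by
    have hc : Continuous fun s : ℝ => 1 - s ^ D * m := by fun_prop
    exact hc.continuousAt.eventually_mem (Ioi_mem_nhds (by simp [hD0]))
  obtain ⟨s, ⟨hsU, hsw⟩, hs⟩ :=
    ((hnear.and hweight).filter_mono nhdsWithin_le_nhds |>.and
      (self_mem_nhdsWithin : ∀ᶠ s in nhdsWithin (0 : ℝ) (Set.Ioi 0), s ∈ Set.Ioi 0)).exists
  have hs : 0 < s := hs
  have hfeas : Feasible D d (γ s) := by
    rw [feasible_iff]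
    refine ⟨(hν.termPSD 0).smul (firstWeight_nonneg hsw.le), hx.smul fun _ => hs.le, ?_⟩
    change ∏ i, entry d (firstWeight D (1 - s ^ D * m) i • ν 0 i) 0
      + ∏ i, entry d (s • x i) 0 = 1
    rw [prod_entry_smul _ _ (fun _ => 0), prod_entry_smul (fun _ => s) _ (fun _ => 0),
      prod_firstWeight hD, hsum, ← hm]
    simp
  have hle := hmin _ hsU hfeas
  have hγobj : objective D d p (γ s) =
      (1 - s ^ D * m) * termValue D d p (ν 0) + s ^ D * termValue D d p x := by
    rw [objective_eq_add]
    change termValue D d p (fun i => firstWeight D (1 - s ^ D * m) i • ν 0 i)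
      + termValue D d p (fun i => s • x i) = _
    rw [termValue_smul, termValue_smul p (fun _ => s), prod_firstWeight hD]
    simp
  rw [hγobj, hobj] at hle
  rw [hobj]
  refine le_of_mul_le_mul_left (a := s ^ D) ?_ (pow_pos hs D)
  linarith

/-- Theorem 2.3 (no spurious local minima): a feasible point `μ ∈ F₂` is a global
minimum of the reformulated objective if and only if, for every `l` with
`α⁽ˡ⁾ = ∏_i μ_{i,0}^{(l)} ≠ 0`, the collapsed point
`((μ₁^{(l)}/α⁽ˡ⁾, μ₂^{(l)}, …, μ_D^{(l)}), (0, …, 0))` is a local minimum of the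
objective on `F₂`. -/
theorem statement12 (D d : ℕ) (hD : 1 ≤ D) (hd : 1 ≤ d)
    (p : MvPolynomial (Fin D) ℝ) (hdeg : p.totalDegree ≤ d)
    (μ : Fin 2 → Fin D → Fin (2*d+1) → ℝ) (hμ : Feasible D d μ) :
    (∀ ρ : Fin 2 → Fin D → Fin (2*d+1) → ℝ, Feasible D d ρ →
        objective D d p μ ≤ objective D d p ρ) ↔
    (∀ l : Fin 2, (∏ i, entry d (μ l i) 0) ≠ 0 →
      ∃ U ∈ nhds (collapse D d μ l (∏ i, entry d (μ l i) 0)),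
        ∀ ρ ∈ U, Feasible D d ρ →
          objective D d p (collapse D d μ l (∏ i, entry d (μ l i) 0)) ≤
            objective D d p ρ) := by
  have hsum := ((feasible_iff μ).1 hμ).2.2
  constructor
  · intro hglob l hl
    have hlow : ∀ k, (∏ i, entry d (μ k i) 0) * objective D d p μ ≤ termValue D d p (μ k) := by
      intro k
      by_cases hk : ∏ i, entry d (μ k i) 0 = 0
      · rw [hk, zero_mul, (hμ.termPSD k).termValue_eq_zero hdeg hk]
      · have h := hglob _ (feasible_collapse hD (hμ.termPSD k) hk)
        rwa [objective_collapse hD,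
          le_inv_mul_iff₀ ((hμ.termPSD k).prod_nonneg.lt_of_ne' hk)] at h
    have hup : termValue D d p (μ l) ≤ (∏ i, entry d (μ l i) 0) * objective D d p μ := by
      have h0 := hlow 0
      have h1 := hlow 1
      have hobj := objective_eq_add p μ
      have hsplit : objective D d p μ = (∏ i, entry d (μ 0 i) 0) * objective D d p μ
          + (∏ i, entry d (μ 1 i) 0) * objective D d p μ := by
        rw [← add_mul, hsum, one_mul]
      rcases Fin.exists_fin_two.1 ⟨l, rfl⟩ with rfl | rfl <;> linarith
    refine ⟨Set.univ, Filter.univ_mem, fun ρ _ hρ => le_trans ?_ (hglob ρ hρ)⟩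
    rwa [objective_collapse hD, inv_mul_le_iff₀ ((hμ.termPSD l).prod_nonneg.lt_of_ne' hl)]
  · intro hloc ρ hρ
    have hterm : ∀ l, termValue D d p (μ l) ≤
        (∏ i, entry d (μ l i) 0) * objective D d p ρ := by
      intro l
      by_cases hl : ∏ i, entry d (μ l i) 0 = 0
      · rw [hl, zero_mul, (hμ.termPSD l).termValue_eq_zero hdeg hl]
      · obtain ⟨U, hU, hmin⟩ := hloc l hl
        have hν := feasible_collapse hD (hμ.termPSD l) hl
        have hν1 : collapse D d μ l (∏ i, entry d (μ l i) 0) 1 = 0 := by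
          ext
          simp [collapse]
        have h0 := mass_mul_objective_le_termValue hD p hν hν1 hU hmin (hρ.termPSD 0)
        have h1 := mass_mul_objective_le_termValue hD p hν hν1 hU hmin (hρ.termPSD 1)
        rw [← inv_mul_le_iff₀ ((hμ.termPSD l).prod_nonneg.lt_of_ne' hl),
          ← objective_collapse hD, objective_eq_add p ρ]
        have h := add_le_add h0 h1
        rwa [← add_mul, ((feasible_iff ρ).1 hρ).2.2, one_mul] at h
    have h := add_le_add (hterm 0) (hterm 1)
    rwa [← add_mul, hsum, one_mul, ← objective_eq_add] at h
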